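/- Let u : ℝ × (0,∞) → ℝ be twice continuously differentiable satisfying u_t = u_xx + x⁻¹·u·u_x − x⁻²·u² − 2x⁻²·u at every (t,x) with x > 0. Fix ε ∈ ℝ. Then the function v(t,x) = x·( (u(t, x−εt) + 2)/(x−εt) − ε ) − 2 satisfies v_t = v_xx + x⁻¹·v·v_x − x⁻²·v² − 2x⁻²·v at every (t,x) with x > 0 and x − εt > 0. (This realizes the flow of the symmetry generator t∂x + [t·x⁻¹(u+2) − x]∂u from the solvable radical L₂.₂ of the maximal invariance algebra sl(2,ℝ) ⋉ L₂.₂ of this equation.) -/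

import Mathlib

/-!
The substitution `u = x w - 2` turns the equation into Burgers' equation
`w_t = w_xx + w w_x`, and in the variable `w = (u + 2) / x` the flow
`u ↦ x ((u(t, x - ε t) + 2) / (x - ε t) - ε) - 2` is the Galilean boost
`w ↦ w(t, x - ε t) - ε`, under which Burgers' equation is invariant: the boost changes `w_t` by
`-ε w_x`, which the shift of the convective term `w w_x` compensates.
-/

/-- `u_t = ∂u/∂t`. -/
noncomputable def pd_t (u : ℝ × ℝ → ℝ) (p : ℝ × ℝ) : ℝ :=
  deriv (fun s => u (s, p.2)) p.1

/-- `u_x = ∂u/∂x`. -/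
noncomputable def pd_x (u : ℝ × ℝ → ℝ) (p : ℝ × ℝ) : ℝ :=
  deriv (fun y => u (p.1, y)) p.2

/-- `u_xx = ∂²u/∂x²`. -/
noncomputable def pd_xx (u : ℝ × ℝ → ℝ) (p : ℝ × ℝ) : ℝ :=
  deriv (deriv (fun y => u (p.1, y))) p.2

open Filter Topology

/-- The pointwise form at `p = (t, x)` of the equation
`u_t = u_xx + x⁻¹ u u_x - x⁻² u² - 2 x⁻² u`; meaningful only for `x ≠ 0`. -/
def SolvesPDEAt (u : ℝ × ℝ → ℝ) (p : ℝ × ℝ) : Prop :=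
  pd_t u p = pd_xx u p + p.2⁻¹ * u p * pd_x u p -
    p.2 ^ (-2 : ℤ) * (u p) ^ 2 - 2 * p.2 ^ (-2 : ℤ) * u p

/-- The pointwise form at `p = (t, x)` of Burgers' equation `w_t = w_xx + w w_x`, the normal form
to which `SolvesPDEAt` is reduced. -/
def SolvesBurgersAt (w : ℝ × ℝ → ℝ) (p : ℝ × ℝ) : Prop :=
  pd_t w p = pd_xx w p + w p * pd_x w p

/-- The substitution `u = x w - 2`, which turns solutions `w` of Burgers' equation into solutions
`u` of `SolvesPDEAt`. -/
def fromBurgers (w : ℝ × ℝ → ℝ) (p : ℝ × ℝ) : ℝ :=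
  p.2 * w p - 2

/-- The substitution `w = (u + 2) / x`, inverse to `fromBurgers` away from `x = 0`. -/
noncomputable def toBurgers (u : ℝ × ℝ → ℝ) (p : ℝ × ℝ) : ℝ :=
  (u p + 2) / p.2

/-- The Galilean boost `w ↦ w(t, x - ε t) - ε`, a symmetry of Burgers' equation. -/
def galileiBoost (ε : ℝ) (w : ℝ × ℝ → ℝ) (p : ℝ × ℝ) : ℝ :=
  w (p.1, p.2 - ε * p.1) - ε

theorem deriv_deriv_id_mul {𝕜 : Type*} [NontriviallyNormedField 𝕜] {g : 𝕜 → 𝕜} {x : 𝕜}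
    (hg : ContDiffAt 𝕜 2 g x) :
    deriv (deriv fun y => y * g y) x = 2 * deriv g x + x * deriv (deriv g) x := by
  have first_deriv : deriv (fun y => y * g y) =ᶠ[𝓝 x] fun y => g y + y * deriv g y := by
    filter_upwards [hg.eventually (by simp)] with y hy
    simpa using deriv_fun_mul differentiableAt_fun_id (hy.differentiableAt two_ne_zero)
  have hg' : DifferentiableAt 𝕜 (deriv g) x :=
    (hg.derivWithin (m := 1) one_add_one_eq_two.le).differentiableAt one_ne_zero
  rw [first_deriv.deriv_eq, deriv_fun_add (hg.differentiableAt two_ne_zero)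
    (differentiableAt_fun_id.fun_mul hg'), deriv_fun_mul differentiableAt_fun_id hg', deriv_id'']
  ring

section

variable {u v w : ℝ × ℝ → ℝ} {p : ℝ × ℝ}

theorem contDiffAt_spatial_slice {n : WithTop ℕ∞} (hw : ContDiffAt ℝ n w p) :
    ContDiffAt ℝ n (fun y => w (p.1, y)) p.2 :=
  hw.comp p.2 (contDiffAt_const.prodMk contDiffAt_id)

theorem SolvesPDEAt.congr_of_eventuallyEq (hu : SolvesPDEAt u p) (h : v =ᶠ[𝓝 p] u) :
    SolvesPDEAt v p := by
  have ht : (fun s => v (s, p.2)) =ᶠ[𝓝 p.1] fun s => u (s, p.2) :=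
    h.comp_tendsto (Continuous.prodMk_left p.2).continuousAt
  have hx : (fun y => v (p.1, y)) =ᶠ[𝓝 p.2] fun y => u (p.1, y) :=
    h.comp_tendsto (Continuous.prodMk_right p.1).continuousAt
  simpa only [SolvesPDEAt, pd_t, pd_x, pd_xx, ht.deriv_eq, hx.deriv_eq, hx.deriv.deriv_eq,
    h.eq_of_nhds] using hu

theorem pd_t_fromBurgers (w : ℝ × ℝ → ℝ) (p : ℝ × ℝ) :
    pd_t (fromBurgers w) p = p.2 * pd_t w p := by
  simp only [pd_t, fromBurgers, deriv_sub_const_fun, deriv_const_mul_field]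

theorem pd_x_fromBurgers (hw : DifferentiableAt ℝ (fun y => w (p.1, y)) p.2) :
    pd_x (fromBurgers w) p = w p + p.2 * pd_x w p := by
  simp only [pd_x, fromBurgers, deriv_sub_const_fun, deriv_fun_mul differentiableAt_fun_id hw,
    deriv_id'', one_mul]

theorem pd_xx_fromBurgers (hw : ContDiffAt ℝ 2 (fun y => w (p.1, y)) p.2) :
    pd_xx (fromBurgers w) p = 2 * pd_x w p + p.2 * pd_xx w p := by
  simp only [pd_xx, pd_x, fromBurgers, deriv_sub_const_fun, deriv_deriv_id_mul hw]

theorem solvesPDEAt_fromBurgers_iff (hw : ContDiffAt ℝ 2 (fun y => w (p.1, y)) p.2)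
    (hp : p.2 ≠ 0) : SolvesPDEAt (fromBurgers w) p ↔ SolvesBurgersAt w p := by
  rw [SolvesPDEAt, SolvesBurgersAt, pd_t_fromBurgers,
    pd_x_fromBurgers (hw.differentiableAt two_ne_zero), pd_xx_fromBurgers hw, fromBurgers,
    ← mul_right_inj' hp (b := pd_t w p)]
  refine Eq.congr_right ?_
  field_simp
  ring

theorem contDiffAt_toBurgers {n : WithTop ℕ∞} (hu : ContDiffAt ℝ n u p) (hp : p.2 ≠ 0) :
    ContDiffAt ℝ n (toBurgers u) p :=
  (hu.add contDiffAt_const).div contDiffAt_snd hp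

theorem fromBurgers_toBurgers_eventuallyEq (u : ℝ × ℝ → ℝ) (hp : p.2 ≠ 0) :
    fromBurgers (toBurgers u) =ᶠ[𝓝 p] u := by
  filter_upwards [continuousAt_snd.eventually_ne hp] with q hq
  rw [fromBurgers, toBurgers, mul_div_cancel₀ _ hq, add_sub_cancel_right]

theorem solvesBurgersAt_toBurgers_iff (hu : ContDiffAt ℝ 2 u p) (hp : p.2 ≠ 0) :
    SolvesBurgersAt (toBurgers u) p ↔ SolvesPDEAt u p := by
  have inverse := fromBurgers_toBurgers_eventuallyEq u hp
  rw [← solvesPDEAt_fromBurgers_iff (contDiffAt_spatial_slice (contDiffAt_toBurgers hu hp)) hp]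
  exact ⟨fun h => h.congr_of_eventuallyEq inverse.symm, fun h => h.congr_of_eventuallyEq inverse⟩

theorem hasDerivAt_comp_prodMk {a b : ℝ → ℝ} {a' b' t : ℝ}
    (hw : DifferentiableAt ℝ w (a t, b t)) (ha : HasDerivAt a a' t) (hb : HasDerivAt b b' t) :
    HasDerivAt (fun s => w (a s, b s))
      (a' * pd_t w (a t, b t) + b' * pd_x w (a t, b t)) t := by
  have h_t : pd_t w (a t, b t) = fderiv ℝ w (a t, b t) (1, 0) :=
    (hw.hasFDerivAt.comp_hasDerivAt (a t)
      ((hasDerivAt_id (a t)).prodMk (hasDerivAt_const (a t) (b t)))).deriv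
  have h_x : pd_x w (a t, b t) = fderiv ℝ w (a t, b t) (0, 1) :=
    (hw.hasFDerivAt.comp_hasDerivAt (b t)
      ((hasDerivAt_const (b t) (a t)).prodMk (hasDerivAt_id (b t)))).deriv
  have h_decomp : (a', b') = a' • ((1 : ℝ), (0 : ℝ)) + b' • ((0 : ℝ), (1 : ℝ)) := by simp
  refine (hw.hasFDerivAt.comp_hasDerivAt t (ha.prodMk hb)).congr_deriv ?_
  rw [h_t, h_x, h_decomp, map_add, map_smul, map_smul, smul_eq_mul, smul_eq_mul]

variable {ε : ℝ}

theorem pd_t_galileiBoost (hw : DifferentiableAt ℝ w (p.1, p.2 - ε * p.1)) :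
    pd_t (galileiBoost ε w) p =
      pd_t w (p.1, p.2 - ε * p.1) - ε * pd_x w (p.1, p.2 - ε * p.1) := by
  have h_line : HasDerivAt (fun s => p.2 - ε * s) (-ε) p.1 := by
    simpa using ((hasDerivAt_id p.1).const_mul ε).const_sub p.2
  exact ((hasDerivAt_comp_prodMk hw (hasDerivAt_id p.1) h_line).sub_const ε).deriv.trans
    (by simp only [id, one_mul, neg_mul, ← sub_eq_add_neg])

theorem pd_x_galileiBoost (ε : ℝ) (w : ℝ × ℝ → ℝ) (p : ℝ × ℝ) :
    pd_x (galileiBoost ε w) p = pd_x w (p.1, p.2 - ε * p.1) := by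
  simp only [pd_x, galileiBoost, deriv_sub_const_fun]
  exact deriv_comp_sub_const (fun y => w (p.1, y)) _ _

theorem pd_xx_galileiBoost (ε : ℝ) (w : ℝ × ℝ → ℝ) (p : ℝ × ℝ) :
    pd_xx (galileiBoost ε w) p = pd_xx w (p.1, p.2 - ε * p.1) := by
  have h_deriv : deriv (fun y => w (p.1, y - ε * p.1)) =
      fun y => deriv (fun z => w (p.1, z)) (y - ε * p.1) :=
    funext fun y => deriv_comp_sub_const (fun z => w (p.1, z)) _ y
  simp only [pd_xx, galileiBoost, deriv_sub_const_fun, h_deriv]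
  exact deriv_comp_sub_const (deriv fun z => w (p.1, z)) _ _

theorem solvesBurgersAt_galileiBoost_iff (hw : DifferentiableAt ℝ w (p.1, p.2 - ε * p.1)) :
    SolvesBurgersAt (galileiBoost ε w) p ↔ SolvesBurgersAt w (p.1, p.2 - ε * p.1) := by
  rw [SolvesBurgersAt, SolvesBurgersAt, pd_t_galileiBoost hw, pd_x_galileiBoost,
    pd_xx_galileiBoost, galileiBoost, sub_mul, ← add_sub_assoc, sub_left_inj]

theorem contDiffAt_galileiBoost {n : WithTop ℕ∞}
    (hw : ContDiffAt ℝ n w (p.1, p.2 - ε * p.1)) : ContDiffAt ℝ n (galileiBoost ε w) p :=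
  (hw.comp p (f := fun q : ℝ × ℝ => (q.1, q.2 - ε * q.1)) (by fun_prop)).sub contDiffAt_const

theorem galilei_like_flow_symmetry_sl2_L22_second_general
    (hu : ContDiffAt ℝ 2 u (p.1, p.2 - ε * p.1)) (hp : p.2 ≠ 0) (hp' : p.2 - ε * p.1 ≠ 0) :
    SolvesPDEAt (fun q : ℝ × ℝ =>
        q.2 * ((u (q.1, q.2 - ε * q.1) + 2) / (q.2 - ε * q.1) - ε) - 2) p ↔
      SolvesPDEAt u (p.1, p.2 - ε * p.1) := by
  have hw : ContDiffAt ℝ 2 (toBurgers u) (p.1, p.2 - ε * p.1) := contDiffAt_toBurgers hu hp'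
  calc SolvesPDEAt (fromBurgers (galileiBoost ε (toBurgers u))) p
    _ ↔ SolvesBurgersAt (galileiBoost ε (toBurgers u)) p :=
      solvesPDEAt_fromBurgers_iff (contDiffAt_spatial_slice (contDiffAt_galileiBoost hw)) hp
    _ ↔ SolvesBurgersAt (toBurgers u) (p.1, p.2 - ε * p.1) :=
      solvesBurgersAt_galileiBoost_iff (hw.differentiableAt two_ne_zero)
    _ ↔ SolvesPDEAt u (p.1, p.2 - ε * p.1) := solvesBurgersAt_toBurgers_iff hu hp'

end

/-- The flow of the symmetry generator `t∂x + [t·x⁻¹(u+2) − x]∂u` of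
`u_t = u_xx + x⁻¹uu_x − x⁻²u² − 2x⁻²u`: if `u` is a solution for `x > 0`, then
`v(t,x) = x·((u(t,x−εt)+2)/(x−εt) − ε) − 2` is a solution for `x > 0`,
`x − εt > 0`. -/
theorem galilei_like_flow_symmetry_sl2_L22_second
    (u : ℝ × ℝ → ℝ) (hu : ContDiffOn ℝ 2 u {p : ℝ × ℝ | 0 < p.2})
    (heq : ∀ p : ℝ × ℝ, 0 < p.2 →
      pd_t u p = pd_xx u p + p.2⁻¹ * u p * pd_x u p -
        p.2 ^ (-2 : ℤ) * (u p) ^ 2 - 2 * p.2 ^ (-2 : ℤ) * u p)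
    (ε : ℝ) :
    ∀ p : ℝ × ℝ, 0 < p.2 → 0 < p.2 - ε * p.1 →
      pd_t (fun q : ℝ × ℝ =>
          q.2 * ((u (q.1, q.2 - ε * q.1) + 2) / (q.2 - ε * q.1) - ε) - 2) p =
        pd_xx (fun q : ℝ × ℝ =>
          q.2 * ((u (q.1, q.2 - ε * q.1) + 2) / (q.2 - ε * q.1) - ε) - 2) p +
        p.2⁻¹ * ((fun q : ℝ × ℝ =>
            q.2 * ((u (q.1, q.2 - ε * q.1) + 2) / (q.2 - ε * q.1) - ε) - 2) p) *
          pd_x (fun q : ℝ × ℝ =>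
            q.2 * ((u (q.1, q.2 - ε * q.1) + 2) / (q.2 - ε * q.1) - ε) - 2) p -
        p.2 ^ (-2 : ℤ) * ((fun q : ℝ × ℝ =>
            q.2 * ((u (q.1, q.2 - ε * q.1) + 2) / (q.2 - ε * q.1) - ε) - 2) p) ^ 2 -
        2 * p.2 ^ (-2 : ℤ) * ((fun q : ℝ × ℝ =>
            q.2 * ((u (q.1, q.2 - ε * q.1) + 2) / (q.2 - ε * q.1) - ε) - 2) p) := by
  intro p hx hy
  have hu' : ContDiffAt ℝ 2 u (p.1, p.2 - ε * p.1) :=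
    hu.contDiffAt ((isOpen_lt continuous_const continuous_snd).mem_nhds hy)
  exact (galilei_like_flow_symmetry_sl2_L22_second_general hu' hx.ne' hy.ne').2 (heq _ hy)
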